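/- arXiv:1704.04319 — 2 statements merged into one kernel-verified Lean document; each statement's English description precedes it below -/
import Mathlib

section
/- L¹ bound for an affine function on a triangle (equation (3.24) of the paper): Let T ⊂ ℝ² be a nondegenerate triangle with vertices a_i, a_j, a_k and area |T|, and let w : ℝ² → ℝ be affine on T with vertex values ordered so that w(a_i) ≥ w(a_j) ≥ w(a_k), with w(a_i) ≥ 0 and w(a_k) ≤ 0. Then ∫_T |w(x)| dx ≤ (7|T|/6) · (w(a_i) − w(a_k)). -/
open MeasureTheory Finset EuclideanGeometry

noncomputable section

/-- The Euclidean plane. -/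
abbrev E2 := EuclideanSpace ℝ (Fin 2)

/-- The closed triangle with vertices `a 0, a 1, a 2`. -/
def tri (a : Fin 3 → E2) : Set E2 := convexHull ℝ (Set.range a)

/-- The interior angle of the triangle at vertex `a i`. -/
def ang (a : Fin 3 → E2) (i : Fin 3) : ℝ :=
  EuclideanGeometry.angle (a (i + 1)) (a i) (a (i + 2))

/-- The length `|e_i|` of the edge opposite vertex `a i`. -/
def elen (a : Fin 3 → E2) (i : Fin 3) : ℝ := dist (a (i + 1)) (a (i + 2))

/-- The area `|T|` of the triangle. -/
def area (a : Fin 3 → E2) : ℝ := (volume (tri a)).toReal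

/-- The gradient (as a vector in the plane) of an affine map `E2 →ᵃ[ℝ] ℝ`. -/
def gradA (g : E2 →ᵃ[ℝ] ℝ) : E2 :=
  (InnerProductSpace.toDual ℝ E2).symm (LinearMap.toContinuousLinearMap g.linear)

/-- **L¹ bound for an affine function on a triangle** (equation (3.24)):
if `w` is affine on `T` with vertex values `w(a_i) ≥ w(a_j) ≥ w(a_k)`,
`w(a_i) ≥ 0` and `w(a_k) ≤ 0`, then `∫_T |w| ≤ (7|T|/6)(w(a_i) - w(a_k))`. -/
theorem abs_integral_affine_triangle (a : Fin 3 → E2)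
    (hind : AffineIndependent ℝ a) (i j k : Fin 3)
    (hij : i ≠ j) (hjk : j ≠ k) (hik : i ≠ k)
    (w : E2 → ℝ) (g : E2 →ᵃ[ℝ] ℝ) (hw : ∀ x ∈ tri a, w x = g x)
    (hord₁ : w (a j) ≤ w (a i)) (hord₂ : w (a k) ≤ w (a j))
    (hpos : 0 ≤ w (a i)) (hneg : w (a k) ≤ 0) :
    (∫ x in tri a, |w x|) ≤ (7 * area a / 6) * (w (a i) - w (a k)) := by
  have hmem : ∀ l, a l ∈ tri a := fun l => subset_convexHull ℝ _ ⟨l, rfl⟩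
  have hcover : ∀ l : Fin 3, l = i ∨ l = j ∨ l = k := by
    intro l; omega
  have hsub : tri a ⊆ g ⁻¹' Set.Icc (w (a k)) (w (a i)) := by
    refine convexHull_min ?_ ((convex_Icc _ _).affine_preimage g)
    rintro _ ⟨l, rfl⟩
    simp only [Set.mem_preimage, ← hw _ (hmem l), Set.mem_Icc]
    rcases hcover l with rfl | rfl | rfl
    · exact ⟨by linarith, le_refl _⟩
    · exact ⟨hord₂, hord₁⟩
    · exact ⟨le_refl _, by linarith⟩
  have hcomp : IsCompact (tri a) := (Set.finite_range a).isCompact_convexHull ℝ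
  have hb : ∀ x ∈ tri a, ‖|w x|‖ ≤ w (a i) - w (a k) := by
    intro x hx
    have h := hsub hx
    simp only [Set.mem_preimage, ← hw x hx, Set.mem_Icc] at h
    rw [Real.norm_eq_abs, abs_abs, abs_le]
    constructor <;> linarith [h.1, h.2]
  have h1 := norm_setIntegral_le_of_norm_le_const (μ := volume) hcomp.measure_lt_top hb
  have h2 : (∫ x in tri a, |w x|) ≤ (w (a i) - w (a k)) * area a :=
    (le_abs_self _).trans h1
  have h3 : 0 ≤ area a := ENNReal.toReal_nonneg
  have h4 : 0 ≤ (w (a i) - w (a k)) * area a := mul_nonneg (by linarith) h3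
  linarith
end
end

section
/- Secant-slope lower bound for the 1D counterexample profile (Remark in Section 2.1): Let 0 < k < 1/2 and let φ : [0,1] → ℝ be continuous with φ(0) = φ(1) = 1, k ≤ φ(t) ≤ 1 for all t ∈ [0,1], and ∫₀¹ φ(t) dt = 1/2. Then there exists t ∈ (0,1] such that (φ(0) − φ(t))/t > (1−k)²/(1−2k); that is, the magnitude of the slope of the secant line from (0, φ(0)) to (t, φ(t)) exceeds (1−k)²/(1−2k) for some t. -/
open MeasureTheory

/-- **Secant-slope lower bound for the 1D counterexample profile** (Remark, Section 2.1):
if `0 < k < 1/2` and `φ : [0,1] → ℝ` is continuous with `φ 0 = φ 1 = 1`,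
`k ≤ φ ≤ 1` on `[0,1]` and `∫₀¹ φ = 1/2`, then there is `t ∈ (0,1]` with
`(φ 0 - φ t)/t > (1-k)²/(1-2k)`. -/
theorem secant_slope_lower_bound (k : ℝ) (hk0 : 0 < k) (hk : k < 1 / 2)
    (φ : ℝ → ℝ) (hcont : ContinuousOn φ (Set.Icc 0 1))
    (h0 : φ 0 = 1) (h1 : φ 1 = 1)
    (hbound : ∀ t ∈ Set.Icc (0 : ℝ) 1, k ≤ φ t ∧ φ t ≤ 1)
    (hint : (∫ t in (0 : ℝ)..1, φ t) = 1 / 2) :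
    ∃ t ∈ Set.Ioc (0 : ℝ) 1, (φ 0 - φ t) / t > (1 - k) ^ 2 / (1 - 2 * k) := by
  by_contra! hcon
  have hk1 : 0 < 1 - k := by linarith
  have hk2 : 0 < 1 - 2 * k := by linarith
  obtain ⟨m, hm⟩ : ∃ m, m = (1 - k) ^ 2 / (1 - 2 * k) := ⟨_, rfl⟩
  obtain ⟨a, ha⟩ : ∃ a, a = (1 - 2 * k) / (1 - k) := ⟨_, rfl⟩
  have ha0 : 0 ≤ a := by rw [ha]; positivity
  have ha1 : a < 1 := by rw [ha, div_lt_one hk1]; linarith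
  have hma : m * a = 1 - k := by
    have n1 := hk1.ne'
    have n2 := hk2.ne'
    rw [hm, ha, div_mul_div_comm, div_eq_iff (mul_ne_zero n2 n1)]; ring
  have hka : (1 - k) * a = 1 - 2 * k := by rw [ha]; field_simp
  have hgc : Continuous (fun t : ℝ => max (1 - m * t) k) := by fun_prop
  have hle : ∀ t ∈ Set.Icc (0 : ℝ) 1, max (1 - m * t) k ≤ φ t := by
    intro t ht
    refine max_le ?_ (hbound t ht).1
    rcases ht.1.eq_or_lt with h | h
    · rw [← h, h0]; simp
    · have := hcon t ⟨h, ht.2⟩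
      rw [← hm, div_le_iff₀ h, h0] at this
      linarith
  have hm1 : 0 < m := by rw [hm]; positivity
  have hlt := intervalIntegral.integral_lt_integral_of_continuousOn_of_le_of_exists_lt
    (a := 0) (b := 1) one_pos hgc.continuousOn hcont
    (fun t ht => hle t ⟨ht.1.le, ht.2⟩)
    ⟨1, by simp, by rw [h1]; exact max_lt (by linarith) (by linarith)⟩
  rw [hint, ← intervalIntegral.integral_add_adjacent_intervals
    (hgc.intervalIntegrable 0 a) (hgc.intervalIntegrable a 1)] at hlt
  have e1 : ∫ t in (0 : ℝ)..a, (1 - m * t) ≤ ∫ t in (0 : ℝ)..a, max (1 - m * t) k :=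
    intervalIntegral.integral_mono_on ha0
      (Continuous.intervalIntegrable (by fun_prop) _ _) (hgc.intervalIntegrable 0 a)
      (fun t _ => le_max_left _ _)
  have e2 : ∫ t in a..1, k ≤ ∫ t in a..1, max (1 - m * t) k :=
    intervalIntegral.integral_mono_on ha1.le
      (Continuous.intervalIntegrable (by fun_prop) _ _) (hgc.intervalIntegrable a 1)
      (fun t _ => le_max_right _ _)
  have e3 : ∫ t in (0 : ℝ)..a, (1 - m * t) = a - m * (a ^ 2 / 2) := by
    rw [intervalIntegral.integral_sub (Continuous.intervalIntegrable (by fun_prop) _ _)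
      (Continuous.intervalIntegrable (by fun_prop) _ _), intervalIntegral.integral_const_mul]
    simp
  rw [e3] at e1
  simp only [intervalIntegral.integral_const, smul_eq_mul] at e2
  have e4 : m * (a ^ 2 / 2) = (1 - k) * a / 2 := by rw [← hma]; ring
  linarith
end
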